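/- Let H be a finite-dimensional complex Hilbert space, Â and B̂ self-adjoint operators with nondegenerate spectra satisfying ⟨φ_a^Â, φ_b^B̂⟩ ≠ 0 for all (a,b), and let (S_{a,b}) be a Born-compatible frame for Â and B̂ forming a basis of 𝓛(H), with dual frame (T_{a,b}) and associated quasiprobability representation (Q, Q̃). Then the Q-conditional expectation satisfies the left pull-through property 𝔼^Q_ρ̂(f(B̂)X̂|B̂) = f(B̂) 𝔼^Q_ρ̂(X̂|B̂) for all density matrices ρ̂ with ⟨φ_b^B̂, ρ̂ φ_b^B̂⟩ ≠ 0 (∀b), all X̂ ∈ 𝓛(H), and all f : σ(B̂) → ℂ, if and only if S_{a,b} = Π_a^Â Π_b^B̂ for all (a,b), i.e., (Q, Q̃) is the left Kirkwood-Dirac representation. -/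

import Mathlib

open scoped ComplexOrder
noncomputable section

variable {H : Type*} [NormedAddCommGroup H] [InnerProductSpace ℂ H] [FiniteDimensional ℂ H]

/-- The rank-one orthogonal projector onto the line spanned by a unit vector `v`. -/
def proj (v : H) : H →ₗ[ℂ] H where
  toFun w := (inner ℂ v w : ℂ) • v
  map_add' x y := by simp [inner_add_right, add_smul]
  map_smul' c x := by simp [inner_smul_right, smul_smul]

/-- The operator `f(Ŷ) = Σ_y f(y) Π_y` associated to a function `f` on the spectrum,
for an operator with orthonormal eigenbasis `φ`. -/
def opF {ι : Type*} [Fintype ι] (φ : ι → H) (f : ι → ℂ) : H →ₗ[ℂ] H :=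
  ∑ i, f i • proj (φ i)


/-- The `Q`-conditional expectation
`𝔼^Q_ρ̂(X̂|B̂) = Σ_{(a,b)} conj(Q̃_{a,b}(X̂†)) (Q_{a,b}(ρ̂)/⟨φ_b^B̂, ρ̂ φ_b^B̂⟩) Π_b^B̂`,
where `Q_{a,b}(ρ̂) = Tr(ρ̂ S†_{a,b})` and `Q̃_{a,b}(X̂) = Tr(X̂ T†_{a,b})`. -/
def QcondExp {ιA ιB : Type*} [Fintype ιA] [Fintype ιB] (φB : ιB → H)
    (S T : ιA × ιB → (H →ₗ[ℂ] H)) (ρ X : H →ₗ[ℂ] H) : H →ₗ[ℂ] H :=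
  ∑ p : ιA × ιB,
    ((starRingEnd ℂ)
        (LinearMap.trace ℂ H (LinearMap.adjoint X ∘ₗ LinearMap.adjoint (T p))) *
      (LinearMap.trace ℂ H (ρ ∘ₗ LinearMap.adjoint (S p)) /
        (inner ℂ (φB p.2) (ρ (φB p.2)) : ℂ))) • proj (φB p.2)

/-!
With `R = S†`, the coefficients of `X` along the basis `R` are `Tr(T_p X)`, and the conditional
expectation of `X` is the function of `B̂` with values
`Tr(ρ ∑_a Tr(T_{a,b} X) R_{a,b}) / ⟨φ_b, ρ φ_b⟩`. Faithful density operators separate operators, so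
left pull-through for all states says that `X ↦ f(B̂) X` multiplies the coefficient of index `(a,b)`
by `f(b)`, that is, `f(B̂) R_{a,b} = f(b) R_{a,b}` for all `f`, or `Π_b R_{a,b} = R_{a,b}`. Summing
over `b` recovers `R_{a,b} = Π_b ∑_{b'} R_{a,b'}`, and the marginal on the right is `Π_a`.
-/

section DualFamily

variable {k M ι : Type*} [CommSemiring k] [AddCommMonoid M] [Module k M]
  [DecidableEq ι] {e : ι → M} {ε : ι → Module.Dual k M}

theorem sum_dual_apply_smul [Fintype ι] (hspan : Submodule.span k (Set.range e) = ⊤)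
    (hdual : ∀ i j, ε i (e j) = if i = j then 1 else 0) (x : M) :
    ∑ i, ε i x • e i = x := by
  have h : ∑ i, (ε i).smulRight (e i) = LinearMap.id :=
    LinearMap.ext_on_range hspan fun j => by simp [hdual]
  simpa using LinearMap.congr_fun h x

theorem forall_dual_apply_eq_mul_iff [Finite ι] (hspan : Submodule.span k (Set.range e) = ⊤)
    (hdual : ∀ i j, ε i (e j) = if i = j then 1 else 0) (g : M →ₗ[k] M) (c : ι → k) :
    (∀ x i, ε i (g x) = c i * ε i x) ↔ ∀ j, g (e j) = c j • e j := by
  constructor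
  · intro h j
    have := Fintype.ofFinite ι
    rw [← sum_dual_apply_smul hspan hdual (g (e j))]
    simp [h, hdual]
  · intro h x i
    have hcoeff : ε i ∘ₗ g = c i • ε i := by
      refine LinearMap.ext_on_range hspan fun j => ?_
      rcases eq_or_ne i j with rfl | hij
      · simp [h]
      · simp [h, hdual, hij]
    exact LinearMap.congr_fun hcoeff x

end DualFamily

theorem linearMap_comp_sum {k M N P ι : Type*} [Semiring k] [AddCommMonoid M] [AddCommMonoid N]
    [AddCommMonoid P] [Module k M] [Module k N] [Module k P] (g : N →ₗ[k] P) (s : Finset ι)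
    (f : ι → M →ₗ[k] N) : g ∘ₗ ∑ i ∈ s, f i = ∑ i ∈ s, g ∘ₗ f i := by
  ext x
  simp

section Proj

theorem proj_apply {V : Type*} [NormedAddCommGroup V] [InnerProductSpace ℂ V] (v w : V) :
    proj v w = (inner ℂ v w : ℂ) • v := rfl

theorem adjoint_proj (v : H) : LinearMap.adjoint (proj v) = proj v := by
  refine ((LinearMap.eq_adjoint_iff _ _).mpr fun x y => ?_).symm
  simp only [proj_apply, inner_smul_left, inner_smul_right, inner_conj_symm]
  ring

theorem trace_proj_comp (v : H) (Y : H →ₗ[ℂ] H) :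
    LinearMap.trace ℂ H (proj v ∘ₗ Y) = inner ℂ v (Y v) := by
  have hsmul : Y ∘ₗ proj v = (innerₛₗ ℂ v).smulRight (Y v) := by
    ext w
    simp [proj_apply]
  rw [LinearMap.trace_comp_comm', hsmul, LinearMap.trace_smulRight, innerₛₗ_apply_apply]

end Proj

section FunctionOfOperator

variable {V ι : Type*} [NormedAddCommGroup V] [InnerProductSpace ℂ V] [Fintype ι] {φ : ι → V}

theorem opF_apply_self (hφ : Orthonormal ℂ φ) (f : ι → ℂ) (b : ι) :
    opF φ f (φ b) = f b • φ b := by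
  classical
  simp [opF, proj_apply, orthonormal_iff_ite.mp hφ]

theorem opF_injective (hφ : Orthonormal ℂ φ) : Function.Injective (opF φ) := by
  intro f g hfg
  ext b
  apply smul_left_injective ℂ (hφ.ne_zero b)
  simp only [← opF_apply_self hφ, hfg]

theorem opF_single [DecidableEq ι] (φ : ι → V) (b : ι) :
    opF φ (Pi.single b 1) = proj (φ b) := by
  simp [opF, Pi.single_apply]

theorem opF_comp_proj (hφ : Orthonormal ℂ φ) (f : ι → ℂ) (b : ι) :
    opF φ f ∘ₗ proj (φ b) = f b • proj (φ b) := by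
  ext x
  simp only [LinearMap.comp_apply, LinearMap.smul_apply, proj_apply, map_smul,
    opF_apply_self hφ, smul_comm (f b)]

theorem opF_comp_opF (hφ : Orthonormal ℂ φ) (f g : ι → ℂ) :
    opF φ f ∘ₗ opF φ g = opF φ (f * g) := by
  rw [opF.eq_def φ g]
  simp only [linearMap_comp_sum, LinearMap.comp_smul, opF_comp_proj hφ, smul_smul]
  simp only [opF, Pi.mul_apply, mul_comm]

theorem forall_opF_comp_eq_smul_iff (hφ : Orthonormal ℂ φ) {R : V →ₗ[ℂ] V} {b : ι} :
    (∀ f : ι → ℂ, opF φ f ∘ₗ R = f b • R) ↔ proj (φ b) ∘ₗ R = R := by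
  classical
  constructor
  · intro h
    simpa [opF_single] using h (Pi.single b 1)
  · intro h f
    rw [← h, ← LinearMap.comp_assoc, opF_comp_proj hφ, LinearMap.smul_comp]

theorem forall_proj_comp_eq_self_iff {κ : Type*} (hφ : Orthonormal ℂ φ)
    {R : κ × ι → V →ₗ[ℂ] V} {E : κ → V →ₗ[ℂ] V} (hE : ∀ a, ∑ b, R (a, b) = E a) :
    (∀ p, proj (φ p.2) ∘ₗ R p = R p) ↔ ∀ p, R p = proj (φ p.2) ∘ₗ E p.1 := by
  classical
  have proj_comp_proj (b c : ι) :
      proj (φ b) ∘ₗ proj (φ c) = (Pi.single b 1 : ι → ℂ) c • proj (φ c) := by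
    rw [← opF_comp_proj hφ, opF_single]
  constructor
  · rintro h ⟨a, b⟩
    have hterm (c : ι) : proj (φ b) ∘ₗ R (a, c) = (Pi.single b 1 : ι → ℂ) c • R (a, c) := by
      rw [← h (a, c), ← LinearMap.comp_assoc, proj_comp_proj, LinearMap.smul_comp]
    simp [← hE, linearMap_comp_sum, hterm, Pi.single_apply]
  · intro h p
    rw [h p, ← LinearMap.comp_assoc, proj_comp_proj, Pi.single_eq_same, one_smul]

end FunctionOfOperator

section Separation

theorem trace_adjoint (X : H →ₗ[ℂ] H) :
    LinearMap.trace ℂ H (LinearMap.adjoint X) = starRingEnd ℂ (LinearMap.trace ℂ H X) := by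
  simp [LinearMap.trace_eq_sum_inner _ (stdOrthonormalBasis ℂ H), LinearMap.adjoint_inner_right]

theorem trace_pos [Nontrivial H] {P : H →ₗ[ℂ] H} (hP : ∀ v ≠ 0, 0 < (inner ℂ v (P v) : ℂ)) :
    0 < LinearMap.trace ℂ H P := by
  let u := stdOrthonormalBasis ℂ H
  have : Nonempty (Fin (Module.finrank ℂ H)) := Fin.pos_iff_nonempty.mp Module.finrank_pos
  rw [LinearMap.trace_eq_sum_inner P u]
  exact Finset.sum_pos (fun i _ => hP _ (u.orthonormal.ne_zero i)) Finset.univ_nonempty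

theorem eq_zero_of_forall_faithful_trace_comp_eq_zero {Y : H →ₗ[ℂ] H}
    (h : ∀ ρ : H →ₗ[ℂ] H, (∀ v ≠ 0, 0 < (inner ℂ v (ρ v) : ℂ)) →
      LinearMap.trace ℂ H ρ = 1 → LinearMap.trace ℂ H (ρ ∘ₗ Y) = 0) :
    Y = 0 := by
  rcases subsingleton_or_nontrivial H with _ | _
  · exact Subsingleton.elim _ _
  have trace_comp_eq_zero (P : H →ₗ[ℂ] H) (hP : ∀ v ≠ 0, 0 < (inner ℂ v (P v) : ℂ)) :
      LinearMap.trace ℂ H (P ∘ₗ Y) = 0 := by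
    set t := LinearMap.trace ℂ H P
    have ht : 0 < t := trace_pos hP
    have hscaled := h (t⁻¹ • P)
      (fun v hv => by
        simpa [inner_smul_right] using mul_pos (RCLike.inv_pos_of_pos ht) (hP v hv))
      (by simpa using inv_mul_cancel₀ ht.ne')
    simpa [LinearMap.smul_comp, ht.ne'] using hscaled
  have id_pos (v : H) (hv : v ≠ 0) : 0 < (inner ℂ v v : ℂ) := by
    rw [inner_self_eq_norm_sq_to_K]
    exact pow_pos (RCLike.ofReal_pos.mpr (norm_pos_iff.mpr hv)) 2
  -- Comparing the strictly positive operators `1` and `1 + Π_v` isolates `⟨v, Y v⟩`.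
  have htrace : LinearMap.trace ℂ H Y = 0 := trace_comp_eq_zero LinearMap.id id_pos
  rw [← inner_map_self_eq_zero]
  intro v
  have hsum : LinearMap.trace ℂ H ((LinearMap.id + proj v) ∘ₗ Y) = 0 := by
    refine trace_comp_eq_zero _ fun w hw => ?_
    have hproj : 0 ≤ (inner ℂ w (proj v w) : ℂ) := by
      rw [proj_apply, inner_smul_right, ← inner_conj_symm v w]
      exact star_mul_self_nonneg _
    simpa [inner_add_right] using add_pos_of_pos_of_nonneg (id_pos w hw) hproj
  rw [LinearMap.add_comp, map_add, LinearMap.id_comp, htrace, zero_add, trace_proj_comp] at hsum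
  rw [← inner_conj_symm, hsum, map_zero]

end Separation

section ConditionalExpectation

variable {ιA ιB : Type*} [Fintype ιA] {φ : ιB → H} {S T : ιA × ιB → H →ₗ[ℂ] H}

/-- The part `∑_a Tr(T_{a,b} X) S†_{a,b}` of the expansion of `X` in the frame `(S†_{a,b})` that
belongs to the index `b`; it carries the dependence of the conditional expectation on `X`. -/
def frameComponent (S T : ιA × ιB → H →ₗ[ℂ] H) (b : ιB) (X : H →ₗ[ℂ] H) : H →ₗ[ℂ] H :=
  ∑ a, LinearMap.trace ℂ H (T (a, b) ∘ₗ X) • LinearMap.adjoint (S (a, b))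

theorem trace_comp_frameComponent [DecidableEq ιA] [DecidableEq ιB]
    (hdual : ∀ p q, LinearMap.trace ℂ H (T p ∘ₗ LinearMap.adjoint (S q)) = if p = q then 1 else 0)
    (a : ιA) (b : ιB) (X : H →ₗ[ℂ] H) :
    LinearMap.trace ℂ H (T (a, b) ∘ₗ frameComponent S T b X) =
      LinearMap.trace ℂ H (T (a, b) ∘ₗ X) := by
  simp [frameComponent, linearMap_comp_sum, LinearMap.comp_smul, hdual]

theorem frameComponent_eq_smul_iff [DecidableEq ιA] [DecidableEq ιB]
    (hdual : ∀ p q, LinearMap.trace ℂ H (T p ∘ₗ LinearMap.adjoint (S q)) = if p = q then 1 else 0)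
    (b : ιB) (c : ℂ) (X Y : H →ₗ[ℂ] H) :
    frameComponent S T b Y = c • frameComponent S T b X ↔
      ∀ a, LinearMap.trace ℂ H (T (a, b) ∘ₗ Y) = c * LinearMap.trace ℂ H (T (a, b) ∘ₗ X) := by
  constructor
  · intro h a
    rw [← trace_comp_frameComponent hdual, h, LinearMap.comp_smul, map_smul,
      trace_comp_frameComponent hdual, smul_eq_mul]
  · intro h
    simp only [frameComponent, h, Finset.smul_sum, smul_smul]

variable [Fintype ιB]

/-- The left pull-through property `𝔼^Q_ρ(f(B̂)X|B̂) = f(B̂) 𝔼^Q_ρ(X|B̂)` of the `Q`-conditional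
expectation, for all `X`, all `f`, and all density operators `ρ` with `⟨φ_b, ρ φ_b⟩ ≠ 0` for every
`b`. A function on the spectrum of `B̂` is encoded as a function of the index `b`. -/
def HasLeftPullThrough (φ : ιB → H) (S T : ιA × ιB → H →ₗ[ℂ] H) : Prop :=
  ∀ ρ : H →ₗ[ℂ] H, (∀ v : H, 0 ≤ (inner ℂ v (ρ v) : ℂ)) →
    LinearMap.trace ℂ H ρ = 1 →
    (∀ b : ιB, (inner ℂ (φ b) (ρ (φ b)) : ℂ) ≠ 0) →
    ∀ (X : H →ₗ[ℂ] H) (f : ιB → ℂ),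
      QcondExp φ S T ρ (opF φ f ∘ₗ X) = opF φ f ∘ₗ QcondExp φ S T ρ X

theorem QcondExp_eq_opF (φ : ιB → H) (S T : ιA × ιB → H →ₗ[ℂ] H) (ρ X : H →ₗ[ℂ] H) :
    QcondExp φ S T ρ X = opF φ fun b =>
      LinearMap.trace ℂ H (ρ ∘ₗ frameComponent S T b X) / inner ℂ (φ b) (ρ (φ b)) := by
  rw [QcondExp, Fintype.sum_prod_type_right, opF]
  refine Finset.sum_congr rfl fun b _ => ?_
  simp only [← Finset.sum_smul, ← LinearMap.adjoint_comp, trace_adjoint, Complex.conj_conj,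
    frameComponent, linearMap_comp_sum, LinearMap.comp_smul, map_sum, map_smul, smul_eq_mul,
    Finset.sum_div, mul_div_assoc]

theorem QcondExp_eq_opF_comp_iff (hφ : Orthonormal ℂ φ) {ρ : H →ₗ[ℂ] H}
    (hρ : ∀ b, (inner ℂ (φ b) (ρ (φ b)) : ℂ) ≠ 0) (f : ιB → ℂ) (X Y : H →ₗ[ℂ] H) :
    QcondExp φ S T ρ Y = opF φ f ∘ₗ QcondExp φ S T ρ X ↔
      ∀ b, LinearMap.trace ℂ H
        (ρ ∘ₗ (frameComponent S T b Y - f b • frameComponent S T b X)) = 0 := by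
  rw [QcondExp_eq_opF, QcondExp_eq_opF, opF_comp_opF hφ, (opF_injective hφ).eq_iff, funext_iff]
  refine forall_congr' fun b => ?_
  rw [Pi.mul_apply, ← mul_div_assoc, div_left_inj' (hρ b), LinearMap.comp_sub,
    LinearMap.comp_smul, map_sub, map_smul, smul_eq_mul, sub_eq_zero]

theorem hasLeftPullThrough_iff_frameComponent (hφ : Orthonormal ℂ φ) :
    HasLeftPullThrough φ S T ↔ ∀ (f : ιB → ℂ) (X : H →ₗ[ℂ] H) (b : ιB),
      frameComponent S T b (opF φ f ∘ₗ X) = f b • frameComponent S T b X := by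
  constructor
  · intro h f X b
    rw [← sub_eq_zero]
    refine eq_zero_of_forall_faithful_trace_comp_eq_zero fun ρ hpos htrace => ?_
    have hne (c : ιB) : (inner ℂ (φ c) (ρ (φ c)) : ℂ) ≠ 0 := (hpos _ (hφ.ne_zero c)).ne'
    have hnonneg (v : H) : 0 ≤ (inner ℂ v (ρ v) : ℂ) := by
      rcases eq_or_ne v 0 with rfl | hv
      · simp
      · exact (hpos v hv).le
    exact (QcondExp_eq_opF_comp_iff hφ hne f X _).mp (h ρ hnonneg htrace hne X f) b
  · intro h ρ _ _ hne X f
    exact (QcondExp_eq_opF_comp_iff hφ hne f X _).mpr fun b => by simp [h]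

theorem hasLeftPullThrough_iff_opF_comp_adjoint [DecidableEq ιA] [DecidableEq ιB]
    (hφ : Orthonormal ℂ φ) (hspan : Submodule.span ℂ (Set.range S) = ⊤)
    (hdual : ∀ p q,
      LinearMap.trace ℂ H (T p ∘ₗ LinearMap.adjoint (S q)) = if p = q then 1 else 0) :
    HasLeftPullThrough φ S T ↔ ∀ (f : ιB → ℂ) (q : ιA × ιB),
      opF φ f ∘ₗ LinearMap.adjoint (S q) = f q.2 • LinearMap.adjoint (S q) := by
  have hspan_adjoint : Submodule.span ℂ (Set.range fun q => LinearMap.adjoint (S q)) = ⊤ := by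
    rw [Set.range_comp' LinearMap.adjoint S, Submodule.span_image_linearEquiv, hspan,
      Submodule.map_top, LinearEquiv.range]
  rw [hasLeftPullThrough_iff_frameComponent hφ]
  refine forall_congr' fun f => ?_
  simp only [frameComponent_eq_smul_iff hdual]
  refine Iff.trans ?_ <| forall_dual_apply_eq_mul_iff hspan_adjoint
    (ε := fun p => LinearMap.trace ℂ H ∘ₗ LinearMap.mulLeft ℂ (T p)) hdual
    (LinearMap.mulLeft ℂ (opF φ f)) fun p => f p.2
  exact forall_congr' fun X => ⟨fun h p => h p.2 p.1, fun h b a => h (a, b)⟩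

theorem stmt17_general [DecidableEq ιA] [DecidableEq ιB] (hφ : Orthonormal ℂ φ)
    {E : ιA → H →ₗ[ℂ] H} (hE : ∀ a, ∑ b, LinearMap.adjoint (S (a, b)) = E a)
    (hspan : Submodule.span ℂ (Set.range S) = ⊤)
    (hdual : ∀ p q,
      LinearMap.trace ℂ H (T p ∘ₗ LinearMap.adjoint (S q)) = if p = q then 1 else 0) :
    HasLeftPullThrough φ S T ↔ ∀ p, S p = LinearMap.adjoint (E p.1) ∘ₗ proj (φ p.2) := by
  rw [hasLeftPullThrough_iff_opF_comp_adjoint hφ hspan hdual, forall_comm]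
  simp only [forall_opF_comp_eq_smul_iff hφ]
  rw [forall_proj_comp_eq_self_iff hφ hE]
  refine forall_congr' fun p => ?_
  rw [← LinearMap.adjoint.injective.eq_iff, LinearMap.adjoint_adjoint, LinearMap.adjoint_comp,
    adjoint_proj]

end ConditionalExpectation

/-- for a Born-compatible frame `(S_{a,b})` (a basis of `𝓛(H)`, with dual frame
`(T_{a,b})`), the associated `Q`-conditional expectation satisfies the left pull-through
property `𝔼^Q_ρ̂(f(B̂)X̂|B̂) = f(B̂)𝔼^Q_ρ̂(X̂|B̂)` for all admissible states `ρ̂`, operators `X̂`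
and functions `f`, if and only if `S_{a,b} = Π_a^Â Π_b^B̂` for all `(a,b)`, i.e. `(Q,Q̃)` is
the left Kirkwood-Dirac representation. -/
theorem stmt17 {ιA ιB : Type*} [Fintype ιA] [Fintype ιB] [DecidableEq ιA] [DecidableEq ιB]
    (φA : OrthonormalBasis ιA ℂ H) (φB : OrthonormalBasis ιB ℂ H)
    (A B : H →ₗ[ℂ] H) (α : ιA → ℝ) (β : ιB → ℝ)
    (hα : Function.Injective α) (hβ : Function.Injective β)
    (hA : ∀ a, A (φA a) = (α a : ℂ) • φA a) (hB : ∀ b, B (φB b) = (β b : ℂ) • φB b)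
    (hAB : ∀ (a : ιA) (b : ιB), (inner ℂ (φA a) (φB b) : ℂ) ≠ 0)
    (S T : ιA × ιB → (H →ₗ[ℂ] H))
    (hBornB : ∀ b₀ : ιB, ∑ a : ιA, LinearMap.adjoint (S (a, b₀)) = proj (φB b₀))
    (hBornA : ∀ a₀ : ιA, ∑ b : ιB, LinearMap.adjoint (S (a₀, b)) = proj (φA a₀))
    (hindep : LinearIndependent ℂ S)
    (hspan : Submodule.span ℂ (Set.range S) = ⊤)
    (hdual : ∀ p q : ιA × ιB,
      LinearMap.trace ℂ H (T p ∘ₗ LinearMap.adjoint (S q)) = if p = q then 1 else 0) :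
    (∀ ρ : H →ₗ[ℂ] H, (∀ v : H, 0 ≤ (inner ℂ v (ρ v) : ℂ)) →
      LinearMap.trace ℂ H ρ = 1 →
      (∀ b : ιB, (inner ℂ (φB b) (ρ (φB b)) : ℂ) ≠ 0) →
      ∀ (X : H →ₗ[ℂ] H) (f : ιB → ℂ),
        QcondExp (fun b => φB b) S T ρ (opF (fun b => φB b) f ∘ₗ X) =
          opF (fun b => φB b) f ∘ₗ QcondExp (fun b => φB b) S T ρ X) ↔
    (∀ p : ιA × ιB, S p = proj (φA p.1) ∘ₗ proj (φB p.2)) := by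
  simpa only [adjoint_proj, HasLeftPullThrough] using
    stmt17_general φB.orthonormal hBornA hspan hdual
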